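/- Let p be a prime and R a commutative ring of characteristic p. Let H ∈ R[X] be a polynomial whose second formal derivative vanishes. For N ∈ ℤ define the R-linear operator θ_N : R[X] → R[X] by θ_N(f) = H·f′ + N·H′·f, where N acts through the canonical map ℤ → R. Then for every N ∈ ℤ the composite θ_{N+p−1} ∘ θ_{N+p−2} ∘ ⋯ ∘ θ_{N+1} ∘ θ_N is the zero map on R[X]. -/

import Mathlib

open Polynomial

/-- The operator `θ_N : f ↦ H·f′ + N·H′·f`, with `N : ℤ` acting through `ℤ → R`. -/
noncomputable def thetaOp {R : Type*} [CommRing R] (H : R[X]) (N : ℤ) (f : R[X]) : R[X] :=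
  H * derivative f + (N : R) • (derivative H * f)

/-- `thetaIter H n N f` is `(θ_{N+n-1} ∘ ⋯ ∘ θ_{N+1} ∘ θ_N) f`. -/
noncomputable def thetaIter {R : Type*} [CommRing R] (H : R[X]) : ℕ → ℤ → R[X] → R[X]
  | 0, _, f => f
  | n + 1, N, f => thetaIter H n (N + 1) (thetaOp H N f)

/-!
The closed formula
`θ_{N+n-1} ∘ ⋯ ∘ θ_N = ∑_{a+b=n} (n choose a) (N+a)(N+a+1)⋯(N+n-1) H^a (H′)^b D^a`
follows by induction from the intertwining relation `D ∘ θ_N = θ_{N+1} ∘ D`, where `D` is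
the derivative; this relation is where `H″ = 0` enters. In each summand the rising factorial
of length `b` is divisible by `b!`, and `D^a` by `a!`; together with the binomial coefficient
this makes the composite divisible by `n!`, which is zero in characteristic `p` when `n = p`.
-/

open Finset Nat

lemma factorial_dvd_ascPochhammer_eval {S : Type*} [Ring S] [BinomialRing S] (n : ℕ) (r : S) :
    (n ! : S) ∣ (ascPochhammer S n).eval r := by
  rw [← ascPochhammer_smeval_eq_eval, ← Ring.factorial_nsmul_multichoose_eq_ascPochhammer,
    nsmul_eq_mul]
  exact dvd_mul_right _ _

lemma ascPochhammer_eval_succ_left {S : Type*} [CommSemiring S] (n : ℕ) (r : S) :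
    (ascPochhammer S (n + 1)).eval r = r * (ascPochhammer S n).eval (r + 1) := by
  simp [ascPochhammer_succ_left]

lemma factorial_dvd_iterate_derivative {S : Type*} [Semiring S] (n : ℕ) (f : S[X]) :
    (n ! : S[X]) ∣ derivative^[n] f :=
  ⟨hasseDeriv n f, by rw [← factorial_smul_hasseDeriv, LinearMap.smul_apply, nsmul_eq_mul]⟩

section Theta

variable {R : Type*} [CommRing R] {H : R[X]}

lemma thetaOp_eq (H : R[X]) (N : ℤ) (f : R[X]) :
    thetaOp H N f = H * derivative f + N * (derivative H * f) := by
  rw [thetaOp, Int.cast_smul_eq_zsmul, zsmul_eq_mul]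

lemma derivative_thetaOp (hH : derivative (derivative H) = 0) (N : ℤ) (f : R[X]) :
    derivative (thetaOp H N f) = thetaOp H (N + 1) (derivative f) := by
  simp only [thetaOp_eq, derivative_add, derivative_mul, derivative_intCast, hH]
  push_cast
  ring

lemma iterate_derivative_thetaOp (hH : derivative (derivative H) = 0) (n : ℕ) (N : ℤ)
    (f : R[X]) : derivative^[n] (thetaOp H N f) = thetaOp H (N + n) (derivative^[n] f) := by
  induction n with
  | zero => simp
  | succ n ih =>
    rw [Function.iterate_succ_apply', Function.iterate_succ_apply', ih, derivative_thetaOp hH,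
      Nat.cast_succ, add_assoc]

theorem thetaIter_eq_sum_antidiagonal (hH : derivative (derivative H) = 0) (n : ℕ) (N : ℤ)
    (f : R[X]) :
    thetaIter H n N f = ∑ ab ∈ antidiagonal n, n.choose ab.1 •
      (ascPochhammer ℤ ab.2).eval (N + ab.1) •
        (H ^ ab.1 * derivative H ^ ab.2 * derivative^[ab.1] f) := by
  induction n generalizing N f with
  | zero => simp [thetaIter]
  | succ n ih =>
    rw [thetaIter, ih, sum_antidiagonal_choose_succ_nsmul
      (fun a b => (ascPochhammer ℤ b).eval (N + a) •
        (H ^ a * derivative H ^ b * derivative^[a] f)), ← sum_add_distrib]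
    refine sum_congr rfl fun ⟨a, b⟩ hab => ?_
    have choose_eq : n.choose b = n.choose a :=
      (Nat.choose_symm_of_eq_add (mem_antidiagonal.mp hab).symm).symm
    have cast_eq : N + (a + 1 : ℕ) = N + a + 1 := by push_cast; ring
    rw [choose_eq, ← nsmul_add, iterate_derivative_thetaOp hH, thetaOp_eq,
      ← Function.iterate_succ_apply' derivative, ascPochhammer_eval_succ_left, cast_eq,
      add_right_comm N 1]
    simp only [zsmul_eq_mul]
    push_cast
    ring

theorem factorial_dvd_thetaIter (hH : derivative (derivative H) = 0) (n : ℕ) (N : ℤ)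
    (f : R[X]) : (n ! : R[X]) ∣ thetaIter H n N f := by
  rw [thetaIter_eq_sum_antidiagonal hH]
  refine dvd_sum fun ⟨a, b⟩ hab => ?_
  obtain rfl : a + b = n := mem_antidiagonal.mp hab
  have factorial_eq : ((a + b)! : R[X]) = (a + b).choose a * (b ! * a !) := by
    rw [← add_choose_mul_factorial_mul_factorial, choose_symm_add]
    push_cast
    ring
  have rising_dvd : (b ! : R[X]) ∣ ((ascPochhammer ℤ b).eval (N + a) : ℤ) := by
    simpa using map_dvd (Int.castRingHom R[X]) (factorial_dvd_ascPochhammer_eval b (N + a))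
  rw [factorial_eq, nsmul_eq_mul, zsmul_eq_mul]
  exact mul_dvd_mul_left _ <| mul_dvd_mul rising_dvd <|
    (factorial_dvd_iterate_derivative a f).mul_left _

theorem stmt_2_general (n : ℕ) (hn : (n ! : R) = 0) (hH : derivative (derivative H) = 0)
    (N : ℤ) (f : R[X]) : thetaIter H n N f = 0 := by
  have factorial_eq_zero : (n ! : R[X]) = 0 := by rw [← C_eq_natCast, hn, C_0]
  exact zero_dvd_iff.mp (factorial_eq_zero ▸ factorial_dvd_thetaIter hH n N f)

end Theta

/-- Let `p` be a prime and `R` a commutative ring of characteristic `p`.  Let `H ∈ R[X]`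
have vanishing second formal derivative.  Then for every `N : ℤ` the composite
`θ_{N+p−1} ∘ ⋯ ∘ θ_{N+1} ∘ θ_N` is the zero map on `R[X]`. -/
theorem stmt_2 (p : ℕ) (hp : p.Prime) (R : Type*) [CommRing R] [CharP R p]
    (H : R[X]) (hH : derivative (derivative H) = 0) (N : ℤ) (f : R[X]) :
    thetaIter H p N f = 0 :=
  stmt_2_general p ((CharP.cast_eq_zero_iff R p _).mpr (dvd_factorial hp.pos le_rfl)) hH N f
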